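/- arXiv:0808.2368 — 2 statements merged into one kernel-verified Lean document; each statement's English description precedes it below -/
import Mathlib

section
/- Let K/L be a quadratic extension of number fields with 𝒪 ⊆ 𝒪_K an order containing 𝒪_L, conductor 𝔣, and 𝔣₀ = 𝔣 ∩ 𝒪_L. Then N_{K/ℚ}(𝔣) = N_{L/ℚ}(N_{K/L}(𝔣)) and 𝔣₀² ⊆ N_{K/L}(𝔣) ⊆ 𝔣₀; consequently N_{L/ℚ}(𝔣₀) ≤ N_{K/ℚ}(𝔣) ≤ N_{L/ℚ}(𝔣₀)². -/
open NumberField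

/-!
For an extension `S / R` of degree `n` and an ideal `f` of `S` with contraction `f₀`, the extension
of `f₀` to `S` lies inside `f` and has relative norm `f₀ ^ n`, so `f₀ ^ n ≤ N(f)` by monotonicity;
each element divides its own norm, so `N(f) ≤ f₀`. Since `R / f₀` embeds into `S / f` and the
extension of `f₀` has absolute norm `‖f₀‖ ^ n`, we get `‖f₀‖ ∣ ‖f‖ ∣ ‖f₀‖ ^ n`. These two
divisibilities also show that `‖f₀‖` and `‖f‖` vanish together, which turns them into inequalities.
-/

open scoped nonZeroDivisors

section Norm

variable {R S : Type*} [CommRing R] [IsDedekindDomain R] [CommRing S] [IsDedekindDomain S]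

theorem absNorm_comap_dvd_absNorm [Module.Free ℤ R] [Module.Free ℤ S] (φ : R →+* S)
    (I : Ideal S) : Ideal.absNorm (I.comap φ) ∣ Ideal.absNorm I := by
  have index_comap : Ideal.absNorm (I.comap φ) =
      I.toAddSubgroup.relIndex φ.toAddMonoidHom.range :=
    AddSubgroup.index_comap I.toAddSubgroup φ.toAddMonoidHom
  rw [index_comap, Ideal.absNorm_eq_index]
  exact AddSubgroup.relIndex_dvd_index_of_normal _ _

variable [Algebra R S] [Module.Finite R S] [Module.IsTorsionFree R S]

theorem relNorm_eq_span_norm (K : Type*) {L : Type*} [Field K] [Field L] [Algebra R K]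
    [IsFractionRing R K] [Algebra S L] [IsFractionRing S L] [Algebra K L] [Algebra R L]
    [IsScalarTower R K L] [IsScalarTower R S L] (I : Ideal S) :
    Ideal.relNorm R I =
      Ideal.span {a : R | ∃ x ∈ I, algebraMap R K a = Algebra.norm K (algebraMap S L x)} := by
  have : FiniteDimensional K L := Module.Finite.of_isLocalization R S R⁰
  have algebraMap_eq_norm_iff (a : R) (x : S) :
      algebraMap R K a = Algebra.norm K (algebraMap S L x) ↔ Algebra.intNorm R S x = a := by
    rw [← Algebra.algebraMap_intNorm (A := R), (IsFractionRing.injective R K).eq_iff, eq_comm]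
  simp only [algebraMap_eq_norm_iff]
  exact Ideal.relNorm_apply R I

theorem comap_pow_finrank_le_relNorm (I : Ideal S) :
    I.comap (algebraMap R S) ^ Module.finrank R S ≤ Ideal.relNorm R I :=
  calc I.comap (algebraMap R S) ^ Module.finrank R S
      = Ideal.relNorm R ((I.comap (algebraMap R S)).map (algebraMap R S)) :=
        (Ideal.relNorm_algebraMap S _).symm
    _ ≤ Ideal.relNorm R I := Ideal.relNorm_mono R Ideal.map_comap_le

variable [Module.Free ℤ R] [Module.Free ℤ S] [Module.Finite ℤ S]

theorem absNorm_dvd_absNorm_comap_pow_finrank (I : Ideal S) :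
    Ideal.absNorm I ∣ Ideal.absNorm (I.comap (algebraMap R S)) ^ Module.finrank R S := by
  have : Module.Finite ℤ R := Module.Finite.left ℤ R S
  rw [← Ideal.absNorm_algebraMap]
  exact Ideal.absNorm_dvd_absNorm_of_le Ideal.map_comap_le

theorem absNorm_comap_eq_zero_iff {I : Ideal S} :
    Ideal.absNorm (I.comap (algebraMap R S)) = 0 ↔ Ideal.absNorm I = 0 := by
  constructor <;> intro hzero
  · exact zero_dvd_iff.mp (hzero ▸ absNorm_comap_dvd_absNorm (algebraMap R S) I)
  · have dvd_pow := absNorm_dvd_absNorm_comap_pow_finrank (R := R) I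
    rw [hzero, zero_dvd_iff] at dvd_pow
    exact eq_zero_of_pow_eq_zero dvd_pow

theorem absNorm_comap_le_absNorm (I : Ideal S) :
    Ideal.absNorm (I.comap (algebraMap R S)) ≤ Ideal.absNorm I := by
  rcases Nat.eq_zero_or_pos (Ideal.absNorm I) with hzero | hpos
  · rw [absNorm_comap_eq_zero_iff.mpr hzero, hzero]
  · exact Nat.le_of_dvd hpos (absNorm_comap_dvd_absNorm _ I)

theorem absNorm_le_absNorm_comap_pow_finrank (I : Ideal S) :
    Ideal.absNorm I ≤ Ideal.absNorm (I.comap (algebraMap R S)) ^ Module.finrank R S := by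
  rcases Nat.eq_zero_or_pos (Ideal.absNorm (I.comap (algebraMap R S))) with hzero | hpos
  · rw [absNorm_comap_eq_zero_iff.mp hzero]
    exact Nat.zero_le _
  · exact Nat.le_of_dvd (pow_pos hpos _) (absNorm_dvd_absNorm_comap_pow_finrank I)

end Norm

theorem stmt_8_general {L K : Type*} [Field L] [NumberField L] [Field K] [NumberField K]
    [Algebra L K] (f : Ideal (𝓞 K))
    (f0 : Ideal (𝓞 L)) (hf0 : f0 = Ideal.comap (algebraMap (𝓞 L) (𝓞 K)) f)
    (Nf : Ideal (𝓞 L))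
    (hNf : Nf = Ideal.span {a : 𝓞 L | ∃ x ∈ f,
      algebraMap (𝓞 L) L a = Algebra.norm L (x : K)}) :
    Ideal.absNorm f = Ideal.absNorm Nf ∧
    f0 ^ Module.finrank L K ≤ Nf ∧ Nf ≤ f0 ∧
    Ideal.absNorm f0 ≤ Ideal.absNorm f ∧
    Ideal.absNorm f ≤ Ideal.absNorm f0 ^ Module.finrank L K := by
  rw [← relNorm_eq_span_norm] at hNf
  rw [IsFractionRing.finrank_eq (𝓞 L) L (𝓞 K) K]
  subst hf0 hNf
  exact ⟨(Ideal.absNorm_relNorm (𝓞 L) (𝓞 K) f).symm, comap_pow_finrank_le_relNorm f,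
    Ideal.relNorm_le_comap (𝓞 L) f, absNorm_comap_le_absNorm f,
    absNorm_le_absNorm_comap_pow_finrank f⟩

/-- Let `K/L` be a quadratic extension of number fields, `𝒪 ⊆ 𝒪_K` an order
containing `𝒪_L` with conductor `𝔣 = {x ∈ 𝒪_K : x𝒪_K ⊆ 𝒪}` and `𝔣₀ = 𝔣 ∩ 𝒪_L`.  Let
`N_{K/L}(𝔣) ⊆ 𝒪_L` be the relative ideal norm (the ideal generated by the norms of elements of
`𝔣`).  Then `N_{K/ℚ}(𝔣) = N_{L/ℚ}(N_{K/L}(𝔣))` and `𝔣₀² ⊆ N_{K/L}(𝔣) ⊆ 𝔣₀`; consequently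
`N_{L/ℚ}(𝔣₀) ≤ N_{K/ℚ}(𝔣) ≤ N_{L/ℚ}(𝔣₀)²`. -/
theorem stmt_8 {L K : Type*} [Field L] [NumberField L] [Field K] [NumberField K]
    [Algebra L K] (hdeg : Module.finrank L K = 2)
    (O : Subring K)
    (hOint : ∀ x ∈ O, IsIntegral ℤ x)
    (hOL : ∀ x : L, IsIntegral ℤ x → algebraMap L K x ∈ O)
    (hOfull : ∃ β ∈ O, β ∉ Set.range (algebraMap L K))
    (f : Ideal (𝓞 K))
    (hf : ∀ x : 𝓞 K, x ∈ f ↔ ∀ y : 𝓞 K, ((x : K) * (y : K)) ∈ O)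
    (f0 : Ideal (𝓞 L))
    (hf0 : f0 = Ideal.comap (algebraMap (𝓞 L) (𝓞 K)) f)
    (Nf : Ideal (𝓞 L))
    (hNf : Nf = Ideal.span {a : 𝓞 L | ∃ x ∈ f,
      algebraMap (𝓞 L) L a = Algebra.norm L (x : K)}) :
    Ideal.absNorm f = Ideal.absNorm Nf ∧
    f0 ^ 2 ≤ Nf ∧ Nf ≤ f0 ∧
    Ideal.absNorm f0 ≤ Ideal.absNorm f ∧ Ideal.absNorm f ≤ (Ideal.absNorm f0) ^ 2 :=
  hdeg ▸ stmt_8_general f f0 hf0 Nf hNf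
end

section
/- Let ν be a finite positive Borel measure on C = [0,∞) ∪ [0, i/2] (the tempered and complementary spectral parameter set), let I ⊆ (λ₀, λ₀+ε) be a closed interval (in the eigenvalue parameter λ = t² + 1/4) meeting the support of ν, and let J be an interval strictly containing I inside (λ₀, λ₀+ε). Then there exists an even function h on ℝ whose Fourier transform is smooth and compactly supported, such that h(t) < 0 whenever t² + 1/4 lies outside J, and ∫_C h dν > 0. -/
open MeasureTheory

/-- The spectral parameter set `C = [0,∞) ∪ [0, i/2] ⊆ ℂ`. -/
def spectralSet : Set ℂ :=
  {z : ℂ | (z.im = 0 ∧ 0 ≤ z.re) ∨ (z.re = 0 ∧ 0 ≤ z.im ∧ z.im ≤ 1/2)}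

/-!
A polynomial in `cos (s z)` is periodic on the real axis: if it is positive at one real point, it is
also positive at points off `J`. The sign is carried instead by a weight `q (z ^ 2)`, where `q` is a
quadratic polynomial such that `q (z ^ 2)` is positive when `z ^ 2 + 1 / 4` lies in `I` and negative
when it lies off `J`; multiplying a cosine transform by `z ^ 2` amounts to applying `-d²/dx²` to the
test function. So take
`h z = p (cos (s z)) * q (z ^ 2) * φ z`, with `φ` a strictly positive cosine transform and `p` a
polynomial which is positive along `cos (s z)`: it has the sign of `q (z ^ 2)`.

It remains to make `∫ h dν` positive. Since `2 / s ^ 2 * (1 - cos (s z)) → z ^ 2` as `s → 0`,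
Weierstrass approximation provides, for any bounded continuous `χ ≥ 0`, polynomials `p` such that
`p (cos (s z)) → χ (z ^ 2)` boundedly on strips. With `χ` the truncation of `q` to `[0, 1]`,
dominated convergence gives `∫ h dν → ∫ χ (z ^ 2) * q (z ^ 2) * φ z dν`, and the limit is positive.
-/

open Filter Topology Polynomial FourierTransform ComplexConjugate
open scoped ComplexOrder Convolution Real

section ComplexCosine

lemma norm_cos_le_exp_abs_im (w : ℂ) : ‖Complex.cos w‖ ≤ Real.exp |w.im| := by
  have h₁ : ‖Complex.exp (w * Complex.I)‖ ≤ Real.exp |w.im| := by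
    simpa [Complex.norm_exp] using neg_le_abs w.im
  have h₂ : ‖Complex.exp (-w * Complex.I)‖ ≤ Real.exp |w.im| := by
    simpa [Complex.norm_exp] using le_abs_self w.im
  rw [Complex.cos, norm_div, div_le_iff₀ (by simp), Complex.norm_ofNat]
  linarith [norm_add_le (Complex.exp (w * Complex.I)) (Complex.exp (-w * Complex.I))]

lemma tendsto_two_div_sq_mul_one_sub_cos (z : ℂ) :
    Tendsto (fun s : ℝ => ((2 / s ^ 2 : ℝ) : ℂ) * (1 - Complex.cos (s * z))) (𝓝[>] 0)
      (𝓝 (z ^ 2)) := by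
  have hderiv : HasDerivAt (fun s : ℝ => Complex.sin (s * (z / 2))) (z / 2) 0 := by
    simpa using ((hasDerivAt_id ((0 : ℝ) : ℂ)).mul_const (z / 2)).csin.comp_ofReal
  have hlim := (hderiv.tendsto_slope_zero_right.pow 2).const_mul 4
  convert! hlim using 2 with s
  · have hcos : Complex.cos (s * z) = 1 - 2 * Complex.sin (s * (z / 2)) ^ 2 := by
      rw [show (s * z : ℂ) = 2 * (s * (z / 2)) by ring, Complex.cos_two_mul, Complex.cos_sq']
      ring
    simp only [hcos, zero_add, Complex.ofReal_zero, zero_mul, Complex.sin_zero, sub_zero,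
      Complex.real_smul]
    push_cast
    ring
  · ring

lemma im_eq_zero_of_even_of_conj {F : ℂ → ℂ} (heven : F.Even)
    (hconj : ∀ z, F (conj z) = conj (F z)) {z : ℂ} (hz : (z ^ 2).im = 0) : (F z).im = 0 := by
  have hsq : conj z ^ 2 = z ^ 2 := by rw [← map_pow, Complex.conj_eq_iff_im.2 hz]
  rw [← Complex.conj_eq_iff_im, ← hconj]
  obtain h | h := sq_eq_sq_iff_eq_or_eq_neg.1 hsq
  · rw [h]
  · rw [h, heven]

lemma im_cos_ofReal_mul_eq_zero {z : ℂ} (hz : (z ^ 2).im = 0) (s : ℝ) :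
    (Complex.cos (s * z)).im = 0 :=
  im_eq_zero_of_even_of_conj (F := fun z => Complex.cos (s * z)) (fun z => by simp)
    (fun z => by simp [← Complex.cos_conj]) hz

lemma aeval_eq_ofReal_eval_re {w : ℂ} (hw : w.im = 0) (p : ℝ[X]) :
    aeval w p = ((p.eval w.re : ℝ) : ℂ) := by
  conv_lhs => rw [← Complex.re_add_im w, hw, Complex.ofReal_zero, zero_mul, add_zero]
  exact aeval_algebraMap_apply_eq_algebraMap_eval _ _

end ComplexCosine

section CosTransform

/-- The Fourier cosine transform `z ↦ ∫ g(x) cos(zx) dx`, evaluated at complex frequencies. -/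
noncomputable def cosTransform (g : ℝ → ℝ) (z : ℂ) : ℂ :=
  ∫ x : ℝ, (g x : ℂ) * Complex.cos (z * x)

/-- Smooth, even, compactly supported functions on the line: the Fourier transforms of the
admissible functions `h`. -/
structure IsEvenTest (g : ℝ → ℝ) : Prop where
  contDiff : ContDiff ℝ (⊤ : ℕ∞) g
  hasCompactSupport : HasCompactSupport g
  even : g.Even

/-- The functions on the complex plane which are cosine transforms of even test functions. -/
def IsCosTransform (h : ℂ → ℂ) : Prop :=
  ∃ g, IsEvenTest g ∧ cosTransform g = h

lemma integrable_ofReal_mul_of_hasCompactSupport {g : ℝ → ℝ} (hg : Continuous g)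
    (hs : HasCompactSupport g) {φ : ℝ → ℂ} (hφ : Continuous φ) :
    Integrable fun x => (g x : ℂ) * φ x :=
  Continuous.integrable_of_hasCompactSupport (by fun_prop)
    (hs.comp_left (g := ((↑) : ℝ → ℂ)) rfl).mul_right

lemma integral_deriv_mul_eq_neg_of_hasCompactSupport {g : ℝ → ℝ} (hg : ContDiff ℝ 1 g)
    (hs : HasCompactSupport g) {v v' : ℝ → ℂ} (hv : ∀ x, HasDerivAt v (v' x) x)
    (hv' : Continuous v') :
    ∫ x, ((deriv g x : ℝ) : ℂ) * v x = -∫ x, (g x : ℂ) * v' x := by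
  have hvc : Continuous v := continuous_iff_continuousAt.2 fun x => (hv x).continuousAt
  have hparts := integral_mul_deriv_eq_deriv_mul_of_integrable
    (u := fun x => (g x : ℂ)) (u' := fun x => ((deriv g x : ℝ) : ℂ))
    (fun x _ => (hg.differentiable one_ne_zero x).hasDerivAt.ofReal_comp) (fun x _ => hv x)
    (integrable_ofReal_mul_of_hasCompactSupport hg.continuous hs hv')
    (integrable_ofReal_mul_of_hasCompactSupport (hg.continuous_deriv le_rfl) hs.deriv hvc)
    (integrable_ofReal_mul_of_hasCompactSupport hg.continuous hs hvc)
  rw [hparts, neg_neg]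

lemma cosTransform_even (g : ℝ → ℝ) : (cosTransform g).Even := fun z => by
  simp [cosTransform]

lemma cosTransform_conj (g : ℝ → ℝ) (z : ℂ) :
    cosTransform g (conj z) = conj (cosTransform g z) := by
  simp [cosTransform, ← integral_conj, ← Complex.cos_conj]

lemma im_cosTransform_eq_zero (g : ℝ → ℝ) {z : ℂ} (hz : (z ^ 2).im = 0) :
    (cosTransform g z).im = 0 :=
  im_eq_zero_of_even_of_conj (cosTransform_even g) (cosTransform_conj g) hz

lemma deriv_odd_of_even {g : ℝ → ℝ} (hg : g.Even) : (deriv g).Odd := fun x => by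
  rw [← neg_eq_iff_eq_neg, ← deriv_comp_neg]
  simp only [hg.eq]

lemma deriv_even_of_odd {g : ℝ → ℝ} (hg : g.Odd) : (deriv g).Even := fun x => by
  rw [← neg_inj, ← deriv_comp_neg]
  simp only [hg.eq, deriv.fun_neg]

namespace IsEvenTest

variable {f g : ℝ → ℝ}

lemma integrable_mul (hg : IsEvenTest g) {φ : ℝ → ℂ} (hφ : Continuous φ) :
    Integrable fun x => (g x : ℂ) * φ x :=
  integrable_ofReal_mul_of_hasCompactSupport hg.contDiff.continuous hg.hasCompactSupport hφ

lemma integrable (hg : IsEvenTest g) : Integrable g :=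
  hg.contDiff.continuous.integrable_of_hasCompactSupport hg.hasCompactSupport

lemma add (hf : IsEvenTest f) (hg : IsEvenTest g) : IsEvenTest (f + g) :=
  ⟨hf.contDiff.add hg.contDiff, hf.hasCompactSupport.add hg.hasCompactSupport,
    hf.even.add hg.even⟩

lemma const_smul (hg : IsEvenTest g) (c : ℝ) : IsEvenTest (c • g) :=
  ⟨contDiff_const.smul hg.contDiff, hg.hasCompactSupport.smul_left, hg.even.const_smul c⟩

lemma mul_of_even (hg : IsEvenTest g) (hfc : ContDiff ℝ (⊤ : ℕ∞) f) (hf : f.Even) :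
    IsEvenTest (g * f) :=
  ⟨hg.contDiff.mul hfc, hg.hasCompactSupport.mul_right, hg.even.mul_even hf⟩

lemma translate_add_translate (hg : IsEvenTest g) (s : ℝ) :
    IsEvenTest fun x => g (x + s) + g (x - s) where
  contDiff := by have := hg.contDiff; fun_prop
  hasCompactSupport :=
    (hg.hasCompactSupport.comp_homeomorph (Homeomorph.addRight s)).add
      (hg.hasCompactSupport.comp_homeomorph (Homeomorph.subRight s))
  even x := by
    beta_reduce
    rw [← hg.even (-x + s), ← hg.even (-x - s), add_comm]
    ring_nf

lemma deriv_deriv (hg : IsEvenTest g) : IsEvenTest (deriv (deriv g)) where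
  contDiff := by simpa using hg.contDiff.iterate_deriv 2
  hasCompactSupport := hg.hasCompactSupport.deriv.deriv
  even := deriv_even_of_odd (deriv_odd_of_even hg.even)

lemma convolution (hf : IsEvenTest f) (hg : IsEvenTest g) :
    IsEvenTest (f ⋆[ContinuousLinearMap.mul ℝ ℝ] g) where
  contDiff := hf.hasCompactSupport.contDiff_convolution_left _ hf.contDiff
    hg.integrable.locallyIntegrable
  hasCompactSupport := hf.hasCompactSupport.convolution _ hg.hasCompactSupport
  even _ := convolution_neg_of_neg_eq _ (.of_forall hf.even) (.of_forall hg.even)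

lemma cosTransform_add (hf : IsEvenTest f) (hg : IsEvenTest g) :
    cosTransform (f + g) = cosTransform f + cosTransform g := by
  ext z
  simp only [cosTransform, Pi.add_apply, Complex.ofReal_add, add_mul]
  exact integral_add (hf.integrable_mul (by fun_prop)) (hg.integrable_mul (by fun_prop))

lemma cosTransform_translate_add_translate (hg : IsEvenTest g) (s : ℝ) (z : ℂ) :
    cosTransform (fun x => g (x + s) + g (x - s)) z =
      2 * Complex.cos (s * z) * cosTransform g z := by
  have hint (r : ℝ) : Integrable fun x : ℝ => (g x : ℂ) * Complex.cos (z * ((x + r : ℝ) : ℂ)) :=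
    hg.integrable_mul (by fun_prop)
  have hint₁ : Integrable fun x : ℝ => (g (x + s) : ℂ) * Complex.cos (z * x) := by
    simpa using (hint (-s)).comp_add_right s
  have hint₂ : Integrable fun x : ℝ => (g (x - s) : ℂ) * Complex.cos (z * x) := by
    simpa using (hint s).comp_sub_right s
  have hshift (r : ℝ) : ∫ x : ℝ, (g (x - r) : ℂ) * Complex.cos (z * x) =
      ∫ x : ℝ, (g x : ℂ) * Complex.cos (z * ((x + r : ℝ) : ℂ)) := by
    simpa using integral_sub_right_eq_self
      (fun x : ℝ => (g x : ℂ) * Complex.cos (z * ((x + r : ℝ) : ℂ))) r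
  calc cosTransform (fun x => g (x + s) + g (x - s)) z
      = (∫ x : ℝ, (g (x - -s) : ℂ) * Complex.cos (z * x)) +
          ∫ x : ℝ, (g (x - s) : ℂ) * Complex.cos (z * x) := by
        simp only [cosTransform, Complex.ofReal_add, add_mul, sub_neg_eq_add]
        exact integral_add hint₁ hint₂
    _ = ∫ x : ℝ, (2 * Complex.cos (s * z)) * ((g x : ℂ) * Complex.cos (z * x)) := by
        rw [hshift, hshift, ← integral_add (hint _) (hint _)]
        congr! 2 with x
        push_cast
        simp only [mul_add, mul_neg, Complex.cos_add, Complex.cos_neg, Complex.sin_neg,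
          mul_comm z s]
        ring
    _ = 2 * Complex.cos (s * z) * cosTransform g z := integral_const_mul _ _

lemma cosTransform_deriv_deriv (hg : IsEvenTest g) (z : ℂ) :
    cosTransform (deriv (deriv g)) z = -z ^ 2 * cosTransform g z := by
  have hg' : ContDiff ℝ (⊤ : ℕ∞) (deriv g) := by simpa using hg.contDiff.iterate_deriv 1
  have hlin (x : ℝ) : HasDerivAt (fun x : ℝ => z * (x : ℂ)) z x := by
    simpa using (hasDerivAt_id x).ofReal_comp.const_mul z
  have hcos (x : ℝ) : HasDerivAt (fun x : ℝ => Complex.cos (z * x)) (-Complex.sin (z * x) * z) x :=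
    (Complex.hasDerivAt_cos _).comp x (hlin x)
  have hsin (x : ℝ) : HasDerivAt (fun x : ℝ => Complex.sin (z * x)) (Complex.cos (z * x) * z) x :=
    (Complex.hasDerivAt_sin _).comp x (hlin x)
  calc cosTransform (deriv (deriv g)) z
      = -∫ x : ℝ, ((deriv g x : ℝ) : ℂ) * (-Complex.sin (z * x) * z) :=
        integral_deriv_mul_eq_neg_of_hasCompactSupport (hg'.of_le (by simp))
          hg.hasCompactSupport.deriv hcos (by fun_prop)
    _ = z * ∫ x : ℝ, ((deriv g x : ℝ) : ℂ) * Complex.sin (z * x) := by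
        rw [← integral_neg, ← integral_const_mul]
        congr! 2
        ring
    _ = z * -∫ x : ℝ, (g x : ℂ) * (Complex.cos (z * x) * z) := by
        rw [integral_deriv_mul_eq_neg_of_hasCompactSupport (hg.contDiff.of_le (by simp))
          hg.hasCompactSupport hsin (by fun_prop)]
    _ = -z ^ 2 * cosTransform g z := by
        simp only [← mul_assoc, integral_mul_const, cosTransform]
        ring

lemma continuous_cosTransform (hg : IsEvenTest g) : Continuous (cosTransform g) := by
  have hgc := hg.contDiff.continuous
  rw [← continuousOn_univ]
  refine continuousOn_integral_of_compact_support hg.hasCompactSupport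
    (Continuous.continuousOn (by fun_prop)) fun z x _ hx => ?_
  simp [image_eq_zero_of_notMem_tsupport hx]

lemma norm_cosTransform_le (hg : IsEvenTest g) {c : ℝ} {z : ℂ} (hz : |z.im| ≤ c) :
    ‖cosTransform g z‖ ≤ ∫ x, ‖g x‖ * Real.exp (c * |x|) := by
  refine norm_integral_le_of_norm_le ?_ (.of_forall fun x => ?_)
  · have hgc := hg.contDiff.continuous
    exact Continuous.integrable_of_hasCompactSupport (by fun_prop)
      hg.hasCompactSupport.norm.mul_right
  · rw [norm_mul, Complex.norm_real]
    gcongr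
    refine (norm_cos_le_exp_abs_im _).trans (Real.exp_le_exp.2 ?_)
    simpa [abs_mul] using mul_le_mul_of_nonneg_right hz (abs_nonneg x)

end IsEvenTest

namespace IsCosTransform

variable {h h₁ h₂ : ℂ → ℂ}

lemma add (H₁ : IsCosTransform h₁) (H₂ : IsCosTransform h₂) : IsCosTransform (h₁ + h₂) := by
  obtain ⟨g₁, hg₁, rfl⟩ := H₁
  obtain ⟨g₂, hg₂, rfl⟩ := H₂
  exact ⟨g₁ + g₂, hg₁.add hg₂, hg₁.cosTransform_add hg₂⟩

lemma const_smul (H : IsCosTransform h) (c : ℝ) : IsCosTransform (c • h) := by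
  obtain ⟨g, hg, rfl⟩ := H
  refine ⟨c • g, hg.const_smul c, ?_⟩
  ext z
  simp [cosTransform, mul_assoc, integral_const_mul]

lemma cos_mul (H : IsCosTransform h) (s : ℝ) :
    IsCosTransform fun z => Complex.cos (s * z) * h z := by
  obtain ⟨g, hg, rfl⟩ := H
  convert! IsCosTransform.const_smul ⟨_, hg.translate_add_translate s, rfl⟩ 2⁻¹ using 2 with z
  simp [hg.cosTransform_translate_add_translate, mul_assoc]

lemma sq_mul (H : IsCosTransform h) : IsCosTransform fun z => z ^ 2 * h z := by
  obtain ⟨g, hg, rfl⟩ := H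
  convert! IsCosTransform.const_smul ⟨_, hg.deriv_deriv, rfl⟩ (-1) using 2 with z
  simp [hg.cosTransform_deriv_deriv]

lemma aeval_mul {m : ℂ → ℂ} (hm : ∀ h, IsCosTransform h → IsCosTransform fun z => m z * h z)
    (p : ℝ[X]) (H : IsCosTransform h) : IsCosTransform fun z => aeval (m z) p * h z := by
  induction p using Polynomial.induction_on with
  | C a => simpa [Pi.smul_def] using H.const_smul a
  | add p q hp hq => simpa [add_mul, Pi.add_def] using hp.add hq
  | monomial n a hn =>
    convert! hm _ hn using 2 with z
    simp only [map_mul, map_pow, aeval_X, pow_succ]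
    ring

lemma integrable (H : IsCosTransform h) {ν : Measure ℂ} [IsFiniteMeasure ν] {c : ℝ}
    (hν : ∀ᵐ z ∂ν, |z.im| ≤ c) : Integrable h ν := by
  obtain ⟨g, hg, rfl⟩ := H
  exact .of_bound hg.continuous_cosTransform.aestronglyMeasurable _
    (hν.mono fun _ hz => hg.norm_cosTransform_le hz)

end IsCosTransform

end CosTransform

section PositiveCosTransform

lemma fourier_mul_gaussian {k : ℝ → ℂ} (hk : Integrable k) (t : ℝ) :
    𝓕 (fun x => k x * Real.exp (-π * x ^ 2)) t = ∫ x, 𝓕 k x * Real.exp (-π * (x - t) ^ 2) := by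
  have hG : Integrable fun x : ℝ => Complex.exp (-π * 1 * x ^ 2 + 2 * π * t * x) := by
    have := GaussianFourier.integrable_cexp_neg_mul_sq_norm_add (V := ℝ) (b := π)
      (by simpa using Real.pi_pos) (2 * π * t) 1
    simpa [← Complex.ofReal_pow] using this
  have hflip := VectorFourier.integral_fourierIntegral_smul_eq_flip (μ := volume) (ν := volume)
    (L := innerₗ ℝ) Real.continuous_fourierChar (by exact continuous_inner) hk hG
  have hgauss := fourier_gaussian_pi' (b := 1) (by simp) (t : ℂ)
  have hflip' : ∫ x : ℝ, 𝓕 k x * Complex.exp (-π * 1 * x ^ 2 + 2 * π * t * x) =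
      ∫ x : ℝ, k x * (1 / 1 ^ (1 / 2 : ℂ) * Complex.exp (-π / 1 * (x + Complex.I * t) ^ 2)) := by
    rw [flip_innerₗ] at hflip
    simp only [← congrFun hgauss]
    exact hflip
  calc 𝓕 (fun x => k x * Real.exp (-π * x ^ 2)) t
      = Complex.exp (-π * t ^ 2) * ∫ x : ℝ,
          k x * (1 / 1 ^ (1 / 2 : ℂ) * Complex.exp (-π / 1 * (x + Complex.I * t) ^ 2)) := by
        rw [Real.fourier_real_eq_integral_exp_smul, ← integral_const_mul]
        refine integral_congr_ae (.of_forall fun x => ?_)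
        simp only [smul_eq_mul, Complex.ofReal_exp, Complex.one_cpow, div_one, one_mul,
          mul_left_comm _ (k x), ← Complex.exp_add]
        congr 2
        push_cast
        linear_combination (π * t ^ 2 : ℂ) * Complex.I_sq
    _ = ∫ x, 𝓕 k x * Real.exp (-π * (x - t) ^ 2) := by
        rw [← hflip', ← integral_const_mul]
        refine integral_congr_ae (.of_forall fun x => ?_)
        simp only [Complex.ofReal_exp, mul_left_comm _ (𝓕 k x), ← Complex.exp_add]
        congr 2
        push_cast
        ring

lemma fourier_mul_gaussian_pos {k : ℝ → ℂ} (hk : Integrable k) (hnonneg : ∀ ξ, 0 ≤ 𝓕 k ξ)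
    {ξ₀ : ℝ} (hξ₀ : 𝓕 k ξ₀ ≠ 0) (t : ℝ) :
    0 < 𝓕 (fun x => k x * Real.exp (-π * x ^ 2)) t := by
  have hreal (ξ : ℝ) : 𝓕 k ξ = ((𝓕 k ξ).re : ℝ) := Complex.eq_re_of_ofReal_le (hnonneg ξ)
  have hcont : Continuous (𝓕 k) := VectorFourier.fourierIntegral_continuous
    Real.continuous_fourierChar (by exact continuous_inner) hk
  have hbound (ξ : ℝ) : ‖(𝓕 k ξ).re‖ ≤ ∫ x, ‖k x‖ :=
    (Complex.abs_re_le_norm _).trans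
      (VectorFourier.norm_fourierIntegral_le_integral_norm _ _ _ _ _)
  have hgauss : Integrable fun x : ℝ => Real.exp (-π * (x - t) ^ 2) :=
    (integrable_exp_neg_mul_sq Real.pi_pos).comp_sub_right t
  have hpos : 0 < ∫ x, (𝓕 k x).re * Real.exp (-π * (x - t) ^ 2) :=
    integral_pos_of_integrable_nonneg_nonzero (x := ξ₀) (by fun_prop)
      (hgauss.bdd_mul (by fun_prop) (.of_forall hbound))
      (fun x => mul_nonneg (Complex.nonneg_iff.1 (hnonneg x)).1 (Real.exp_pos _).le)
      (mul_ne_zero (fun h => hξ₀ <| by rw [hreal, h, Complex.ofReal_zero]) (Real.exp_pos _).ne')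
  calc (0 : ℂ) < ((∫ x, (𝓕 k x).re * Real.exp (-π * (x - t) ^ 2) : ℝ) : ℂ) :=
        Complex.zero_lt_real.2 hpos
    _ = ∫ x, 𝓕 k x * Real.exp (-π * (x - t) ^ 2) := by
        rw [← integral_complex_ofReal]
        congr! 2 with x
        rw [Complex.ofReal_mul, ← hreal]
    _ = 𝓕 (fun x => k x * Real.exp (-π * x ^ 2)) t := (fourier_mul_gaussian hk t).symm

lemma IsEvenTest.cosTransform_two_pi_mul {g : ℝ → ℝ} (hg : IsEvenTest g) (t : ℝ) :
    cosTransform g (2 * π * t) = 𝓕 (fun x => (g x : ℂ)) t := by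
  set F : ℝ → ℂ := fun x => (g x : ℂ) * Complex.exp (-(2 * π * t * x) * Complex.I)
  have hF : Integrable F := hg.integrable_mul (by fun_prop)
  calc cosTransform g (2 * π * t)
      = ∫ x, 2⁻¹ * (F x + F (-x)) := by
        rw [cosTransform]
        congr! 2 with x
        simp only [F, Complex.cos, hg.even.eq]
        push_cast
        ring_nf
    _ = ∫ x, F x := by
        rw [integral_const_mul, integral_add hF hF.comp_neg, integral_neg_eq_self]
        ring
    _ = 𝓕 (fun x => (g x : ℂ)) t := by
        rw [Real.fourier_real_eq_integral_exp_smul]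
        congr! 2 with x
        simp only [F, smul_eq_mul, mul_comm (g x : ℂ)]
        push_cast
        ring_nf

lemma IsEvenTest.cosTransform_pos_of_re_eq_zero {g : ℝ → ℝ} (hg : IsEvenTest g) (hg₀ : 0 ≤ g)
    (hg_ne : g ≠ 0) {z : ℂ} (hz : z.re = 0) : 0 < cosTransform g z := by
  obtain ⟨x₀, hx₀⟩ := Function.ne_iff.1 hg_ne
  have hcosh : cosTransform g z = ((∫ x, g x * Real.cosh (z.im * x) : ℝ) : ℂ) := by
    rw [← integral_complex_ofReal, cosTransform]
    congr! 2 with x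
    have hzx : z * x = (z.im * x : ℂ) * Complex.I := by
      conv_lhs => rw [← Complex.re_add_im z, hz]
      push_cast
      ring
    rw [hzx, Complex.cos_mul_I]
    push_cast
    rfl
  have hgc := hg.contDiff.continuous
  rw [hcosh, Complex.zero_lt_real]
  exact Continuous.integral_pos_of_hasCompactSupport_nonneg_nonzero (x := x₀) (by fun_prop)
    hg.hasCompactSupport.mul_right (fun x => mul_nonneg (hg₀ x) (Real.cosh_pos _).le)
    (mul_ne_zero hx₀ (Real.cosh_pos _).ne')

lemma IsEvenTest.fourier_convolution_self {f : ℝ → ℝ} (hf : IsEvenTest f) (ξ : ℝ) :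
    𝓕 (fun x => ((f ⋆[ContinuousLinearMap.mul ℝ ℝ] f) x : ℂ)) ξ =
      (((cosTransform f (2 * π * ξ)).re ^ 2 : ℝ) : ℂ) := by
  have hconv : (fun x => ((f ⋆[ContinuousLinearMap.mul ℝ ℝ] f) x : ℂ)) =
      (fun x => (f x : ℂ)) ⋆[ContinuousLinearMap.mul ℂ ℂ] (fun x => (f x : ℂ)) := by
    ext x
    simp only [convolution_def, ContinuousLinearMap.mul_apply', ← Complex.ofReal_mul]
    exact integral_complex_ofReal.symm
  have him : (cosTransform f (2 * π * ξ)).im = 0 :=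
    im_cosTransform_eq_zero f (by rw [← Complex.ofReal_ofNat]; norm_cast)
  rw [hconv, Real.fourier_bilin_convolution_eq _ hf.integrable.ofReal hf.integrable.ofReal,
    ← hf.cosTransform_two_pi_mul, ContinuousLinearMap.mul_apply', ← sq, Complex.ofReal_pow,
    ← Complex.re_add_im (cosTransform f _), him]
  simp

lemma exists_isEvenTest_cosTransform_pos :
    ∃ g, IsEvenTest g ∧ ∀ z : ℂ, (z ^ 2).im = 0 → 0 < cosTransform g z := by
  -- The transform of `f ⋆ f` is a square, hence nonnegative on the real axis; multiplying `f ⋆ f`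
  -- by a Gaussian convolves its transform with a Gaussian, which removes the zeros.
  let f : ContDiffBump (0 : ℝ) := ⟨1, 2, one_pos, one_lt_two⟩
  have hf : IsEvenTest f := ⟨f.contDiff, f.hasCompactSupport, f.neg⟩
  set k : ℝ → ℝ := f ⋆[ContinuousLinearMap.mul ℝ ℝ] f
  have hk : IsEvenTest k := hf.convolution hf
  have hkF (ξ : ℝ) : 𝓕 (fun x => (k x : ℂ)) ξ = (((cosTransform f (2 * π * ξ)).re ^ 2 : ℝ) : ℂ) :=
    hf.fourier_convolution_self ξ
  have hkF₀ : 𝓕 (fun x => (k x : ℂ)) 0 ≠ 0 := by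
    have hint : cosTransform f 0 = ((∫ x, f x : ℝ) : ℂ) := by
      simp [cosTransform, integral_complex_ofReal]
    rw [hkF, Complex.ofReal_zero, mul_zero, hint, Complex.ofReal_re]
    exact_mod_cast (pow_pos f.integral_pos 2).ne'
  have hk_nonneg : 0 ≤ k := fun x => integral_nonneg fun y => mul_nonneg f.nonneg f.nonneg
  have hk_ne : k ≠ 0 := fun h => hkF₀ <| by
    simp [h, Real.fourier_real_eq_integral_exp_smul]
  have hg : IsEvenTest (k * fun x => Real.exp (-π * x ^ 2)) :=
    hk.mul_of_even (by fun_prop) fun x => by simp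
  refine ⟨_, hg, fun z hz => ?_⟩
  have hz' : z.re = 0 ∨ z.im = 0 := by
    simpa [sq, ← two_mul, mul_comm z.im] using hz
  obtain hre | him := hz'
  · refine hg.cosTransform_pos_of_re_eq_zero
      (mul_nonneg hk_nonneg fun x => (Real.exp_pos _).le) (fun h => hk_ne ?_) hre
    ext x
    simpa using congrFun h x
  · have hz_eq : z = 2 * π * ((z.re / (2 * π) : ℝ) : ℂ) := by
      rw [← Complex.ofReal_ofNat, ← Complex.ofReal_mul, ← Complex.ofReal_mul,
        mul_div_cancel₀ _ Real.two_pi_pos.ne']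
      exact Complex.ext rfl him
    rw [hz_eq, hg.cosTransform_two_pi_mul]
    simpa using fourier_mul_gaussian_pos hk.integrable.ofReal
      (fun ξ => (hkF ξ).symm ▸ Complex.zero_le_real.2 (sq_nonneg _)) hkF₀ (z.re / (2 * π))

end PositiveCosTransform

section Concentration

/-- The points `z` of the strip `|Im z| ≤ c` at which the eigenvalue `z² + 1/4` is real, that is
`ℝ ∪ i[-c, c]`. -/
def realSquareStrip (c : ℝ) : Set ℂ :=
  {z | (z ^ 2).im = 0 ∧ |z.im| ≤ c}

lemma spectralSet_subset_realSquareStrip : spectralSet ⊆ realSquareStrip (1 / 2) := by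
  rintro z (⟨him, -⟩ | ⟨hre, h₀, h₁⟩)
  · simp [realSquareStrip, sq, him]
  · simp [realSquareStrip, sq, hre, abs_of_nonneg h₀]
    linarith

lemma exists_polynomial_cos_near {f : ℝ → ℝ} (hf : Continuous f) (c s : ℝ) {δ : ℝ} (hδ : 0 < δ) :
    ∃ p : ℝ[X], ∀ z : ℂ, |z.im| ≤ c →
      |p.eval (Complex.cos (s * z)).re - f (Complex.cos (s * z)).re| < δ := by
  set R := Real.exp (|s| * c)
  obtain ⟨p, hp⟩ := exists_polynomial_near_of_continuousOn (-R) R f hf.continuousOn δ hδ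
  refine ⟨p, fun z hz => hp _ (abs_le.1 ?_)⟩
  calc |(Complex.cos (s * z)).re| ≤ ‖Complex.cos (s * z)‖ := Complex.abs_re_le_norm _
    _ ≤ Real.exp |(s * z : ℂ).im| := norm_cos_le_exp_abs_im _
    _ ≤ R := by
      rw [Complex.im_ofReal_mul, abs_mul]
      exact Real.exp_le_exp.2 (mul_le_mul_of_nonneg_left hz (abs_nonneg s))

lemma exists_polynomial_cos_tendsto {χ : ℝ → ℝ} (hχ : Continuous χ) {B : ℝ}
    (hχB : ∀ y, χ y ∈ Set.Icc 0 B) (c : ℝ) :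
    ∃ P : ℝ → ℝ[X], ∀ z : ℂ, |z.im| ≤ c →
      (∀ s : ℝ, s ∈ Set.Ioc 0 1 → (P s).eval (Complex.cos (s * z)).re ∈ Set.Ioo 0 (B + 2)) ∧
      Tendsto (fun s : ℝ => (P s).eval (Complex.cos (s * z)).re) (𝓝[>] 0) (𝓝 (χ (z ^ 2).re)) := by
  -- The shift by `s` makes the approximants positive even where `χ` vanishes.
  have happrox (s : ℝ) : ∃ p : ℝ[X], 0 < s → ∀ z : ℂ, |z.im| ≤ c →
      |p.eval (Complex.cos (s * z)).re -
        (χ (2 / s ^ 2 * (1 - (Complex.cos (s * z)).re)) + s)| < s := by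
    by_cases hs : 0 < s
    · obtain ⟨p, hp⟩ := exists_polynomial_cos_near
        (f := fun v => χ (2 / s ^ 2 * (1 - v)) + s) (by fun_prop) c s hs
      exact ⟨p, fun _ => hp⟩
    · exact ⟨0, fun h => (hs h).elim⟩
  choose P hP using happrox
  refine ⟨P, fun z hz => ?_⟩
  set u : ℝ → ℝ := fun s => χ (2 / s ^ 2 * (1 - (Complex.cos (s * z)).re))
  have hu₀ (s : ℝ) : 0 ≤ u s := (hχB _).1
  have huB (s : ℝ) : u s ≤ B := (hχB _).2
  have hlower {s : ℝ} (hs : 0 < s) : u s < (P s).eval (Complex.cos (s * z)).re := by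
    linarith [abs_lt.1 (hP s hs z hz)]
  have hupper {s : ℝ} (hs : 0 < s) : (P s).eval (Complex.cos (s * z)).re < u s + 2 * s := by
    linarith [abs_lt.1 (hP s hs z hz)]
  have hu : Tendsto u (𝓝[>] 0) (𝓝 (χ (z ^ 2).re)) := by
    have hre := (Complex.continuous_re.tendsto _).comp (tendsto_two_div_sq_mul_one_sub_cos z)
    refine ((hχ.tendsto _).comp hre).congr fun s => ?_
    simp only [u, Function.comp_apply, Complex.re_ofReal_mul, Complex.sub_re, Complex.one_re]
  have herr : Tendsto (fun s : ℝ => 2 * s) (𝓝[>] 0) (𝓝 0) :=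
    ((continuous_const_mul 2).tendsto' 0 0 (mul_zero 2)).mono_left nhdsWithin_le_nhds
  have hpos : ∀ᶠ s : ℝ in 𝓝[>] 0, 0 < s := self_mem_nhdsWithin
  constructor
  · intro s ⟨hs₀, hs₁⟩
    exact ⟨(hu₀ s).trans_lt (hlower hs₀), by linarith [hupper hs₀, huB s]⟩
  · exact tendsto_of_tendsto_of_tendsto_of_le_of_le' hu (by simpa using hu.add herr)
      (hpos.mono fun _ hs => (hlower hs).le) (hpos.mono fun _ hs => (hupper hs).le)

lemma exists_pos_polynomial_cos_integral_pos {ν : Measure ℂ} {c : ℝ} (hν : ∀ᵐ z ∂ν, |z.im| ≤ c)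
    {W : ℂ → ℝ} (hW : Integrable W ν) {χ : ℝ → ℝ} (hχ : Continuous χ) {B : ℝ}
    (hχB : ∀ y, χ y ∈ Set.Icc 0 B) (hpos : 0 < ∫ z, χ (z ^ 2).re * W z ∂ν) :
    ∃ (s : ℝ) (p : ℝ[X]), (∀ z : ℂ, |z.im| ≤ c → 0 < p.eval (Complex.cos (s * z)).re) ∧
      0 < ∫ z, p.eval (Complex.cos (s * z)).re * W z ∂ν := by
  obtain ⟨P, hP⟩ := exists_polynomial_cos_tendsto hχ hχB c
  have hsmall : ∀ᶠ s : ℝ in 𝓝[>] 0, s ∈ Set.Ioc 0 1 := Ioc_mem_nhdsGT one_pos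
  have hint : Tendsto (fun s : ℝ => ∫ z, (P s).eval (Complex.cos (s * z)).re * W z ∂ν) (𝓝[>] 0)
      (𝓝 (∫ z, χ (z ^ 2).re * W z ∂ν)) := by
    refine tendsto_integral_filter_of_dominated_convergence (fun z => (B + 2) * ‖W z‖)
      (.of_forall fun s => ?_) ?_ (hW.norm.const_mul _) ?_
    · exact (Continuous.aestronglyMeasurable (by fun_prop)).mul hW.aestronglyMeasurable
    · filter_upwards [hsmall] with s hs
      filter_upwards [hν] with z hz
      obtain ⟨h₀, h₁⟩ := (hP z hz).1 s hs
      rw [norm_mul, Real.norm_of_nonneg h₀.le]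
      gcongr
    · exact hν.mono fun z hz => (hP z hz).2.mul_const _
  obtain ⟨s, hs_int, hs⟩ := ((hint.eventually_const_lt hpos).and hsmall).exists
  exact ⟨s, P s, fun z hz => ((hP z hz).1 s hs).1, hs_int⟩

lemma integral_clamp_mul_pos {α : Type*} [MeasurableSpace α] {μ : Measure α} {f w : α → ℝ}
    (hf : AEStronglyMeasurable f μ) (hw : ∀ᵐ x ∂μ, 0 < w x)
    (hfw : Integrable (fun x => f x * w x) μ) (hpos : μ {x | 0 < f x} ≠ 0) :
    0 < ∫ x, max 0 (min 1 (f x)) * (f x * w x) ∂μ := by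
  have hclamp (y : ℝ) : 0 ≤ max 0 (min 1 y) * y := by
    obtain hy | hy := le_total y 0
    · simp [hy]
    · positivity
  have hnonneg : ∀ᵐ x ∂μ, 0 ≤ max 0 (min 1 (f x)) * (f x * w x) := hw.mono fun x hx => by
    rw [← mul_assoc]
    exact mul_nonneg (hclamp _) hx.le
  have hint : Integrable (fun x => max 0 (min 1 (f x)) * (f x * w x)) μ := by
    refine hfw.bdd_mul (c := 1) ?_ (.of_forall fun x => ?_)
    · exact (by fun_prop : Continuous fun y : ℝ => max 0 (min 1 y)).comp_aestronglyMeasurable hf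
    · simp [abs_of_nonneg]
  rw [integral_pos_iff_support_of_nonneg_ae hnonneg hint]
  refine (pos_iff_ne_zero.2 hpos).trans_le (measure_mono_ae (hw.mono fun x hx hfx => ?_))
  have hfx : 0 < f x := hfx
  exact (by positivity : 0 < max 0 (min 1 (f x)) * (f x * w x)).ne'

end Concentration

theorem exists_cosTransform_sign_and_integral_pos (ν : Measure ℂ) [IsFiniteMeasure ν] {c : ℝ}
    (hν : ∀ᵐ z ∂ν, z ∈ realSquareStrip c) (q : ℝ[X]) (hq : ν {z | 0 < q.eval (z ^ 2).re} ≠ 0) :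
    ∃ g, IsEvenTest g ∧
      (∀ z ∈ realSquareStrip c, q.eval (z ^ 2).re < 0 → cosTransform g z < 0) ∧
      0 < ∫ z, cosTransform g z ∂ν := by
  obtain ⟨g₀, hg₀, hg₀_pos⟩ := exists_isEvenTest_cosTransform_pos
  have hφ_pos {z : ℂ} (hz : z ∈ realSquareStrip c) : 0 < (cosTransform g₀ z).re :=
    (Complex.pos_iff.1 (hg₀_pos z hz.1)).1
  set W : ℂ → ℝ := fun z => q.eval (z ^ 2).re * (cosTransform g₀ z).re
  have hqφ : IsCosTransform fun z => aeval (z ^ 2) q * cosTransform g₀ z :=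
    .aeval_mul (fun _ => .sq_mul) q ⟨g₀, hg₀, rfl⟩
  have hqφ_eq (z) (hz : z ∈ realSquareStrip c) :
      aeval (z ^ 2) q * cosTransform g₀ z = (W z : ℂ) := by
    rw [aeval_eq_ofReal_eval_re hz.1, Complex.eq_re_of_ofReal_le (hg₀_pos z hz.1).le]
    exact (Complex.ofReal_mul _ _).symm
  have hν_im : ∀ᵐ z ∂ν, |z.im| ≤ c := hν.mono fun _ hz => hz.2
  have hW : Integrable W ν := (hqφ.integrable hν_im).re.congr <| hν.mono fun z hz => by
    simp [hqφ_eq z hz]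
  have hχW : 0 < ∫ z, max 0 (min 1 (q.eval (z ^ 2).re)) * W z ∂ν :=
    integral_clamp_mul_pos (Continuous.aestronglyMeasurable (by fun_prop))
      (hν.mono fun _ => hφ_pos) hW hq
  obtain ⟨s, p, hp, hpW⟩ := exists_pos_polynomial_cos_integral_pos hν_im hW
    (χ := fun y => max 0 (min 1 (q.eval y))) (by fun_prop) (B := 1) (by simp) hχW
  obtain ⟨g, hg, hg_eq⟩ := hqφ.aeval_mul (fun _ h => h.cos_mul s) p
  have hg_real (z) (hz : z ∈ realSquareStrip c) :
      cosTransform g z = ((p.eval (Complex.cos (s * z)).re * W z : ℝ) : ℂ) := by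
    rw [congrFun hg_eq z, hqφ_eq z hz, aeval_eq_ofReal_eval_re (im_cos_ofReal_mul_eq_zero hz.1 s)]
    exact (Complex.ofReal_mul _ _).symm
  refine ⟨g, hg, fun z hz hqz => ?_, ?_⟩
  · rw [hg_real z hz]
    exact Complex.real_lt_real.2 <|
      mul_neg_of_pos_of_neg (hp z hz.2) (mul_neg_of_neg_of_pos hqz (hφ_pos hz))
  · rw [integral_congr_ae (hν.mono hg_real), integral_complex_ofReal]
    exact Complex.zero_lt_real.2 hpW

/-- Let `ν` be a finite positive Borel measure on
`C = [0,∞) ∪ [0, i/2]`, let `I = [a,b] ⊆ (λ₀, λ₀+ε)` be a closed interval in the eigenvalue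
parameter `λ = t² + 1/4` meeting the support of `ν`, and let `J = (a', b')` be an interval
strictly containing `I` inside `(λ₀, λ₀+ε)`.  Then there is an even function `h` on ℝ (here
realized as the Fourier cosine transform `h z = ∫ g x cos(zx) dx` of a smooth, even, compactly
supported `g`, so that `ĥ = g` is smooth and compactly supported, and `h` makes sense on all of
`C`), such that `h(t) < 0` whenever `t² + 1/4` lies outside `J` (for `t ∈ C`), and
`∫_C h dν > 0`. -/
theorem stmt_10 (ν : Measure ℂ) [IsFiniteMeasure ν] (hνC : ν spectralSetᶜ = 0)
    (lam0 ε a b a' b' : ℝ) (hε : 0 < ε)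
    (hIa : lam0 < a) (hIab : a ≤ b) (hIb : b < lam0 + ε)
    (hJa : lam0 < a') (hJa' : a' < a) (hJb : b < b') (hJb' : b' < lam0 + ε)
    (hsupp : 0 < ν {z : ℂ | z ∈ spectralSet ∧ (z ^ 2 + 1/4).re ∈ Set.Icc a b}) :
    ∃ g : ℝ → ℝ, ContDiff ℝ (⊤ : ℕ∞) g ∧ HasCompactSupport g ∧ (∀ x : ℝ, g (-x) = g x) ∧
      (∀ z ∈ spectralSet, (z ^ 2 + 1/4).re ∉ Set.Ioo a' b' →
        ((∫ x : ℝ, (g x : ℂ) * Complex.cos (z * x)).re < 0 ∧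
         (∫ x : ℝ, (g x : ℂ) * Complex.cos (z * x)).im = 0)) ∧
      0 < (∫ z : ℂ, (∫ x : ℝ, (g x : ℂ) * Complex.cos (z * x)) ∂ν).re ∧
      (∫ z : ℂ, (∫ x : ℝ, (g x : ℂ) * Complex.cos (z * x)) ∂ν).im = 0 := by
  obtain ⟨a₁, ha₁, haa₁⟩ := exists_between hJa'
  obtain ⟨b₁, hbb₁, hb₁⟩ := exists_between hJb
  let q : ℝ[X] := (X + C (1 / 4 - a₁)) * (C (b₁ - 1 / 4) - X)
  have hq (z : ℂ) : q.eval (z ^ 2).re =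
      ((z ^ 2 + 1 / 4).re - a₁) * (b₁ - (z ^ 2 + 1 / 4).re) := by
    simp only [q, eval_mul, eval_add, eval_sub, eval_X, eval_C, Complex.add_re]
    norm_num
    ring
  have hν : ∀ᵐ z ∂ν, z ∈ realSquareStrip (1 / 2) :=
    mem_of_superset (mem_ae_iff.2 hνC) spectralSet_subset_realSquareStrip
  have hq_pos : ν {z | 0 < q.eval (z ^ 2).re} ≠ 0 := by
    refine (hsupp.trans_le (measure_mono fun z ⟨_, hza, hzb⟩ => ?_)).ne'
    simpa only [Set.mem_ofPred_eq, hq] using mul_pos (by linarith) (by linarith)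
  obtain ⟨g, hg, hneg, hpos⟩ := exists_cosTransform_sign_and_integral_pos ν hν q hq_pos
  refine ⟨g, hg.contDiff, hg.hasCompactSupport, hg.even, fun z hz hzJ => ?_, ?_⟩
  · refine Complex.lt_def.1 (hneg z (spectralSet_subset_realSquareStrip hz) ?_)
    rw [hq]
    by_cases hza : (z ^ 2 + 1 / 4).re < a₁
    · exact mul_neg_of_neg_of_pos (by linarith) (by linarith)
    · have hzb : b' ≤ (z ^ 2 + 1 / 4).re := not_lt.1 fun h => hzJ ⟨by linarith, h⟩
      exact mul_neg_of_pos_of_neg (by linarith) (by linarith)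
  · exact (Complex.lt_def.1 hpos).imp id Eq.symm
end
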